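/- Let Z = max_{1 ≤ j ≤ M} G_j for a finite centered Gaussian vector containing the zero variable, and suppose E[Z] > 0. Then there exists an absolute constant c ∈ (0,1) such that P(min_{1 ≤ j ≤ M} G_j > −(E[Z])/4) ≤ c. Equivalently, P(∃ j : G_j ≤ −(E[Z])/4) ≥ 1 − c > 0. -/

import Mathlib

open MeasureTheory ProbabilityTheory

/-!
Rotating two independent copies of a centered Gaussian vector `X` by `π / 4` gives Fernique's tail
inequality `P(‖X‖ ≤ s) P(‖X‖ > √2 (t + s) + s) ≤ P(‖X‖ > t + s) ^ 2`. Bounding one factor on the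
right by `P(‖X‖ > s)` and integrating over `t > 0` controls `E ‖X‖` by `P(‖X‖ > s)`, so that `‖X‖`
reaches `θ E ‖X‖` with probability at least `(√2 - 1 - θ) / (1 - θ)`. In the sup norm this means
that some `|X i|` is large; by the symmetry of the law, with at least half that probability some
`X i` is at most `-θ E ‖X‖`, and `E (max X) ≤ E ‖X‖`.
-/

section LayerCake

variable {α : Type*} [MeasurableSpace α] {μ : Measure α} {f g : α → ℝ}

lemma lintegral_ofReal_eq_lintegral_meas_lt (hf : AEMeasurable f μ) :
    ∫⁻ x, ENNReal.ofReal (f x) ∂μ = ∫⁻ t in Set.Ioi 0, μ {x | t < f x} := by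
  calc ∫⁻ x, ENNReal.ofReal (f x) ∂μ
    _ = ∫⁻ x, ENNReal.ofReal (max (f x) 0) ∂μ := by simp
    _ = ∫⁻ t in Set.Ioi 0, μ {x | t < max (f x) 0} :=
      lintegral_eq_lintegral_meas_lt μ (ae_of_all _ fun _ ↦ le_max_right _ _)
        (hf.max aemeasurable_const)
    _ = ∫⁻ t in Set.Ioi 0, μ {x | t < f x} :=
      setLIntegral_congr_fun measurableSet_Ioi fun t ht ↦ by
        simp only [lt_max_iff, (Set.mem_Ioi.1 ht).not_gt, or_false]

lemma mul_lintegral_ofReal_le_of_forall_mul_meas_lt_le {a b : ENNReal} (ha : a ≠ ⊤)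
    (hb : b ≠ ⊤) (hf : AEMeasurable f μ) (hg : AEMeasurable g μ)
    (h : ∀ t > 0, a * μ {x | t < f x} ≤ b * μ {x | t < g x}) :
    a * ∫⁻ x, ENNReal.ofReal (f x) ∂μ ≤ b * ∫⁻ x, ENNReal.ofReal (g x) ∂μ := by
  rw [lintegral_ofReal_eq_lintegral_meas_lt hf, lintegral_ofReal_eq_lintegral_meas_lt hg,
    ← lintegral_const_mul' _ _ ha, ← lintegral_const_mul' _ _ hb]
  exact setLIntegral_mono' measurableSet_Ioi h

lemma ofReal_integral_le_lintegral_ofReal (f : α → ℝ) :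
    ENNReal.ofReal (∫ x, f x ∂μ) ≤ ∫⁻ x, ENNReal.ofReal (f x) ∂μ := by
  by_cases hf : Integrable f μ
  · calc ENNReal.ofReal (∫ x, f x ∂μ)
      _ ≤ ENNReal.ofReal (∫ x, max (f x) 0 ∂μ) :=
        ENNReal.ofReal_le_ofReal (integral_mono hf hf.pos_part fun _ ↦ le_max_left _ _)
      _ = ∫⁻ x, ENNReal.ofReal (f x) ∂μ := by
        rw [ofReal_integral_eq_lintegral_ofReal hf.pos_part (ae_of_all _ fun _ ↦ le_max_right _ _)]
        simp
  · simp [integral_undef hf]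

end LayerCake

section RotationInvariant

variable {E : Type*} [SeminormedAddCommGroup E] [NormedSpace ℝ E] [SecondCountableTopology E]
  [MeasurableSpace E] [BorelSpace E] {ν : Measure E}

-- The thresholds in Fernique's inequality are arranged so that both sides integrate in `t`.
lemma measure_norm_le_mul_measure_lt_le [SFinite ν]
    (hrot : (ν.prod ν).map (ContinuousLinearMap.rotation (-(Real.pi / 4))) = ν.prod ν)
    (s : ℝ) {t : ℝ} (ht : 0 < t) :
    ν {x | ‖x‖ ≤ s} * ν {x | t < (‖x‖ - s) / √2 - s} ≤
      ν {x | s < ‖x‖} * ν {x | t < ‖x‖ - s} := by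
  calc ν {x | ‖x‖ ≤ s} * ν {x | t < (‖x‖ - s) / √2 - s}
    _ = ν {x | ‖x‖ ≤ s} * ν {x | √2 * (t + s) + s < ‖x‖} := by
      simp only [lt_sub_iff_add_lt, lt_div_iff₀' (show 0 < √2 by positivity)]
    _ ≤ ν {x | (√2 * (t + s) + s - s) / √2 < ‖x‖} ^ 2 :=
      measure_le_mul_measure_gt_le_of_map_rotation_eq_self hrot _ _
    _ = ν {x | t + s < ‖x‖} * ν {x | t < ‖x‖ - s} := by
      rw [add_sub_cancel_right, mul_div_cancel_left₀ _ (by positivity), sq]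
      simp only [lt_sub_iff_add_lt]
    _ ≤ ν {x | s < ‖x‖} * ν {x | t < ‖x‖ - s} := by
      gcongr with x
      linarith

lemma measureReal_norm_le_mul_integral_norm_sub_le [IsProbabilityMeasure ν]
    (hrot : (ν.prod ν).map (ContinuousLinearMap.rotation (-(Real.pi / 4))) = ν.prod ν)
    (h_int : Integrable (fun x ↦ ‖x‖) ν) {s : ℝ} (hs : 0 ≤ s) :
    ν.real {x | ‖x‖ ≤ s} * ((∫ x, ‖x‖ ∂ν - s) / √2 - s) ≤
      ν.real {x | s < ‖x‖} * ∫ x, ‖x‖ ∂ν := by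
  have hexcess : ∫ x, ((‖x‖ - s) / √2 - s) ∂ν = (∫ x, ‖x‖ ∂ν - s) / √2 - s := by
    rw [integral_sub (by fun_prop) (by fun_prop), integral_div, integral_sub h_int (by fun_prop)]
    simp
  have hnonneg : 0 ≤ ν.real {x | s < ‖x‖} * ∫ x, ‖x‖ ∂ν :=
    mul_nonneg measureReal_nonneg (integral_nonneg fun _ ↦ norm_nonneg _)
  rw [← ENNReal.ofReal_le_ofReal_iff hnonneg, ← hexcess, ENNReal.ofReal_mul measureReal_nonneg,
    ENNReal.ofReal_mul measureReal_nonneg, ofReal_measureReal, ofReal_measureReal]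
  calc ν {x | ‖x‖ ≤ s} * ENNReal.ofReal (∫ x, ((‖x‖ - s) / √2 - s) ∂ν)
    _ ≤ ν {x | ‖x‖ ≤ s} * ∫⁻ x, ENNReal.ofReal ((‖x‖ - s) / √2 - s) ∂ν := by
      gcongr
      exact ofReal_integral_le_lintegral_ofReal _
    _ ≤ ν {x | s < ‖x‖} * ∫⁻ x, ENNReal.ofReal (‖x‖ - s) ∂ν :=
      mul_lintegral_ofReal_le_of_forall_mul_meas_lt_le (by finiteness) (by finiteness)
        (by fun_prop) (by fun_prop) fun _ ↦ measure_norm_le_mul_measure_lt_le hrot s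
    _ ≤ ν {x | s < ‖x‖} * ∫⁻ x, ENNReal.ofReal ‖x‖ ∂ν := by
      gcongr with x
      exact sub_le_self _ hs
    _ = ν {x | s < ‖x‖} * ENNReal.ofReal (∫ x, ‖x‖ ∂ν) := by
      rw [ofReal_integral_eq_lintegral_ofReal h_int (ae_of_all _ fun _ ↦ norm_nonneg _)]

lemma le_measureReal_mul_integral_norm_le_norm [IsProbabilityMeasure ν]
    (hrot : (ν.prod ν).map (ContinuousLinearMap.rotation (-(Real.pi / 4))) = ν.prod ν)
    (h_int : Integrable (fun x ↦ ‖x‖) ν) {θ : ℝ} (hθ₀ : 0 ≤ θ) (hθ₁ : θ < 1) :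
    (√2 - 1 - θ) / (1 - θ) ≤ ν.real {x | θ * ∫ y, ‖y‖ ∂ν ≤ ‖x‖} := by
  have hsq : √2 * √2 = 2 := Real.mul_self_sqrt (by norm_num)
  have hsqrt : 1 < √2 := Real.one_lt_sqrt_two
  rw [div_le_iff₀ (by linarith)]
  set m := ∫ y, ‖y‖ ∂ν
  obtain hm | hm : m = 0 ∨ 0 < m := (integral_nonneg fun _ ↦ norm_nonneg _).eq_or_lt'
  · have huniv : {x : E | θ * m ≤ ‖x‖} = Set.univ := by simp [hm]
    rw [huniv, probReal_univ]
    nlinarith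
  set p := ν.real {x | θ * m < ‖x‖} with hp
  have hcompl : ν.real {x | ‖x‖ ≤ θ * m} = 1 - p := by
    rw [hp, ← probReal_compl_eq_one_sub (measurableSet_lt (by fun_prop) (by fun_prop))]
    simp only [Set.compl_ofPred, not_lt]
  have hp_le : p ≤ ν.real {x | θ * m ≤ ‖x‖} := measureReal_mono fun _ ↦ le_of_lt (α := ℝ)
  have hscaled : (1 - p) * (1 - θ - √2 * θ) ≤ √2 * p := by
    refine le_of_mul_le_mul_right ?_ (show 0 < m / √2 by positivity)
    calc (1 - p) * (1 - θ - √2 * θ) * (m / √2)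
      _ = ν.real {x | ‖x‖ ≤ θ * m} * ((m - θ * m) / √2 - θ * m) := by
        rw [hcompl]
        field_simp
      _ ≤ p * m := measureReal_norm_le_mul_integral_norm_sub_le hrot h_int (by positivity)
      _ = √2 * p * (m / √2) := by field_simp
  calc √2 - 1 - θ
    _ = (√2 - 1) * (1 - θ - √2 * θ) := by linear_combination θ * hsq
    _ ≤ (√2 - 1) * (p * ((1 + √2) * (1 - θ))) :=
      mul_le_mul_of_nonneg_left (by linarith) (by linarith)
    _ = p * (1 - θ) := by linear_combination p * (1 - θ) * hsq
    _ ≤ ν.real {x | θ * m ≤ ‖x‖} * (1 - θ) :=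
      mul_le_mul_of_nonneg_right hp_le (by linarith)

end RotationInvariant

section Symmetric

lemma isNegInvariant_of_isGaussian {E : Type*} [NormedAddCommGroup E] [NormedSpace ℝ E]
    [SecondCountableTopology E] [CompleteSpace E] [MeasurableSpace E] [BorelSpace E]
    {ν : Measure E} [IsGaussian ν] (hν : ν[id] = 0) : ν.IsNegInvariant where
  neg_eq_self := by
    have hneg : IsFiniteMeasure ν.neg := inferInstanceAs (IsFiniteMeasure (ν.map Neg.neg))
    refine Measure.ext_of_charFunDual (funext fun L ↦ ?_)
    calc charFunDual ν.neg L
      _ = charFunDual ν (-L) := by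
        rw [Measure.neg_def]
        convert charFunDual_map (μ := ν) (-ContinuousLinearMap.id ℝ E) L using 2
        · rfl
        · ext x
          simp
      _ = charFunDual ν L := by
        simp [IsGaussian.charFunDual_eq_of_integral_eq_zero hν, variance_neg]

lemma measureReal_le_norm_le_two_mul {ι : Type*} [Fintype ι] [Nonempty ι] {ν : Measure (ι → ℝ)}
    [IsFiniteMeasure ν] [ν.IsNegInvariant] (t : ℝ) :
    ν.real {x | t ≤ ‖x‖} ≤ 2 * ν.real {x | ∃ i, x i ≤ -t} := by
  have hcover : {x : ι → ℝ | t ≤ ‖x‖} ⊆ {x | ∃ i, x i ≤ -t} ∪ -{x | ∃ i, x i ≤ -t} := by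
    intro x hx
    obtain ⟨i, hi⟩ := Finite.exists_max fun i ↦ ‖x i‖
    have hti : t ≤ |x i| := hx.trans ((pi_norm_le_iff_of_nonempty x).2 hi)
    exact (le_abs'.1 hti).imp (fun h ↦ ⟨i, h⟩) (fun h ↦ ⟨i, neg_le_neg h⟩)
  calc ν.real {x | t ≤ ‖x‖}
    _ ≤ ν.real {x | ∃ i, x i ≤ -t} + ν.real (-{x | ∃ i, x i ≤ -t}) :=
      (measureReal_mono hcover).trans (measureReal_union_le _ _)
    _ = 2 * ν.real {x | ∃ i, x i ≤ -t} := by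
      rw [measureReal_def ν (-_), Measure.measure_neg, ← measureReal_def, two_mul]

end Symmetric

section GaussianVector

variable {Ω : Type*} [MeasurableSpace Ω] {μ : Measure Ω} {ι : Type*} [Fintype ι]

lemma hasGaussianLaw_pi_of_forall_map_sum {X : Ω → ι → ℝ} (hX : AEMeasurable X μ)
    (h : ∀ a : ι → ℝ, ∃ m v, μ.map (fun ω ↦ ∑ i, a i * X ω i) = gaussianReal m v) :
    HasGaussianLaw X μ := by
  classical
  refine ⟨isGaussian_of_map_eq_gaussianReal fun L ↦ ?_⟩
  obtain ⟨m, v, hmv⟩ := h fun i ↦ L (Pi.single i 1)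
  refine ⟨m, v, ?_⟩
  rw [← hmv, AEMeasurable.map_map_of_aemeasurable (by fun_prop) hX]
  congr with ω
  calc L (X ω)
    _ = L (∑ i, X ω i • Pi.single i 1) := by rw [← pi_eq_sum_univ']
    _ = ∑ i, L (Pi.single i 1) * X ω i := by
      simp only [map_sum, map_smul, smul_eq_mul, mul_comm]

lemma abs_iSup_le_pi_norm (x : ι → ℝ) : |⨆ i, x i| ≤ ‖x‖ := by
  refine abs_le.2 ⟨?_, Real.iSup_le (fun i ↦ (le_abs_self _).trans (norm_le_pi_norm x i))
    (norm_nonneg x)⟩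
  obtain hι | ⟨⟨i⟩⟩ := isEmpty_or_nonempty ι
  · simp
  · calc -‖x‖
      _ ≤ x i := neg_le_of_abs_le (norm_le_pi_norm x i)
      _ ≤ ⨆ i, x i := le_ciSup (Set.finite_range x).bddAbove i

lemma le_measureReal_exists_le_neg_mul_integral_norm [Nonempty ι] {ν : Measure (ι → ℝ)}
    [IsGaussian ν] (hν : ν[id] = 0) {θ : ℝ} (hθ₀ : 0 ≤ θ) (hθ₁ : θ < 1) :
    (√2 - 1 - θ) / (2 * (1 - θ)) ≤ ν.real {x | ∃ i, x i ≤ -(θ * ∫ y, ‖y‖ ∂ν)} := by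
  have := isNegInvariant_of_isGaussian hν
  have hnorm := le_measureReal_mul_integral_norm_le_norm (IsGaussian.map_rotation_eq_self hν _)
    IsGaussian.integrable_id.norm hθ₀ hθ₁
  rw [mul_comm, ← div_div, div_le_iff₀' (by norm_num)]
  exact hnorm.trans (measureReal_le_norm_le_two_mul _)

lemma integral_iSup_le_integral_norm {X : Ω → ι → ℝ} (hX : Integrable X μ) :
    ∫ ω, ⨆ i, X ω i ∂μ ≤ ∫ ω, ‖X ω‖ ∂μ :=
  (le_abs_self _).trans
    (norm_integral_le_of_norm_le (f := fun ω ↦ ⨆ i, X ω i) hX.norm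
      (ae_of_all _ fun ω ↦ abs_iSup_le_pi_norm (X ω)))

lemma le_measureReal_exists_le_neg_mul_integral_iSup {ι : Type*} [Finite ι] [Nonempty ι]
    {X : Ω → ι → ℝ} (hX : HasGaussianLaw X μ) (hX₀ : ∀ i, ∫ ω, X ω i ∂μ = 0) {θ : ℝ}
    (hθ₀ : 0 ≤ θ) (hθ₁ : θ < 1) :
    (√2 - 1 - θ) / (2 * (1 - θ)) ≤ μ.real {ω | ∃ i, X ω i ≤ -(θ * ∫ ω', ⨆ i, X ω' i ∂μ)} := by
  cases nonempty_fintype ι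
  have := hX.isProbabilityMeasure
  have := hX.isGaussian_map
  have hmean : (μ.map X)[id] = 0 := by
    rw [integral_map hX.aemeasurable (by fun_prop)]
    ext i
    exact (eval_integral hX.integrable.eval i).trans (hX₀ i)
  have hnorm : ∫ x, ‖x‖ ∂(μ.map X) = ∫ ω, ‖X ω‖ ∂μ :=
    integral_map hX.aemeasurable (by fun_prop)
  calc (√2 - 1 - θ) / (2 * (1 - θ))
    _ ≤ (μ.map X).real {x | ∃ i, x i ≤ -(θ * ∫ ω, ‖X ω‖ ∂μ)} :=
      hnorm ▸ le_measureReal_exists_le_neg_mul_integral_norm hmean hθ₀ hθ₁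
    _ = μ.real {ω | ∃ i, X ω i ≤ -(θ * ∫ ω', ‖X ω'‖ ∂μ)} :=
      map_measureReal_apply_of_aemeasurable hX.aemeasurable (by measurability)
    _ ≤ μ.real {ω | ∃ i, X ω i ≤ -(θ * ∫ ω', ⨆ i, X ω' i ∂μ)} := by
      refine measureReal_mono fun ω ⟨i, hi⟩ ↦ ⟨i, hi.trans (neg_le_neg ?_)⟩
      exact mul_le_mul_of_nonneg_left (integral_iSup_le_integral_norm hX.integrable) hθ₀

end GaussianVector

theorem stmt_2_general {Ω ι : Type*} [MeasurableSpace Ω] {μ : Measure Ω} [Finite ι] [Nonempty ι]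
    {X : Ω → ι → ℝ} (hX : HasGaussianLaw X μ) (hX₀ : ∀ i, ∫ ω, X ω i ∂μ = 0) :
    μ {ω | ∀ i, -(∫ ω', ⨆ i', X ω' i' ∂μ) / 4 < X ω i} ≤ ENNReal.ofReal (9 / 10) ∧
      μ {ω | ∃ i, X ω i ≤ -(∫ ω', ⨆ i', X ω' i' ∂μ) / 4} ≥ ENNReal.ofReal (1 - 9 / 10) := by
  have := hX.isProbabilityMeasure
  set S := {ω | ∃ i, X ω i ≤ -(∫ ω', ⨆ i', X ω' i' ∂μ) / 4} with hS
  have hS_meas : NullMeasurableSet S μ :=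
    hX.aemeasurable.nullMeasurable
      (show MeasurableSet {x : ι → ℝ | ∃ i, x i ≤ -(∫ ω', ⨆ i', X ω' i' ∂μ) / 4} by measurability)
  have hS_ge : 1 - 9 / 10 ≤ μ.real S := by
    have hsqrt : 7 / 5 ≤ √2 := Real.le_sqrt_of_sq_le (by norm_num)
    calc (1 - 9 / 10 : ℝ)
      _ ≤ (√2 - 1 - 1 / 4) / (2 * (1 - 1 / 4)) := by
        rw [le_div_iff₀ (by norm_num)]
        linarith
      _ ≤ μ.real {ω | ∃ i, X ω i ≤ -(1 / 4 * ∫ ω', ⨆ i, X ω' i ∂μ)} :=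
        le_measureReal_exists_le_neg_mul_integral_iSup hX hX₀ (by norm_num) (by norm_num)
      _ = μ.real S := by rw [hS, one_div_mul_eq_div, neg_div]
  have hS_compl : {ω | ∀ i, -(∫ ω', ⨆ i', X ω' i' ∂μ) / 4 < X ω i} = Sᶜ := by
    ext; simp [hS]
  rw [hS_compl, ge_iff_le, ← ofReal_measureReal, ← ofReal_measureReal (s := S),
    probReal_compl_eq_one_sub₀ hS_meas]
  exact ⟨ENNReal.ofReal_le_ofReal (by linarith), ENNReal.ofReal_le_ofReal hS_ge⟩

/-- for a finite centered Gaussian vector containing the zero variable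
with positive expected maximum `E Z`, the probability that all coordinates are
above `-(E Z)/4` is at most an absolute constant `c < 1`; equivalently, with
probability at least `1 - c > 0` some coordinate is `≤ -(E Z)/4`. -/
theorem stmt_2 :
    ∃ c : ℝ, 0 < c ∧ c < 1 ∧
      ∀ (Ω : Type) [MeasurableSpace Ω] (μ : Measure Ω) [IsProbabilityMeasure μ]
        (M : ℕ), 0 < M →
        ∀ G : Fin M → Ω → ℝ,
          (∀ j, Measurable (G j)) →
          -- (G_1, …, G_M) is a centered jointly Gaussian vector
          (∀ a : Fin M → ℝ, ∃ v : NNReal,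
            Measure.map (fun ω => ∑ j, a j * G j ω) μ = gaussianReal 0 v) →
          -- one coordinate is identically 0
          (∃ j₀, ∀ ω, G j₀ ω = 0) →
          Integrable (fun ω => ⨆ j, G j ω) μ →
          0 < ∫ ω, ⨆ j, G j ω ∂μ →
          μ {ω | ∀ j, -(∫ ω', ⨆ j', G j' ω' ∂μ) / 4 < G j ω} ≤ ENNReal.ofReal c ∧
          μ {ω | ∃ j, G j ω ≤ -(∫ ω', ⨆ j', G j' ω' ∂μ) / 4} ≥
            ENNReal.ofReal (1 - c) := by
  refine ⟨9 / 10, by norm_num, by norm_num, fun Ω _ μ _ M _ G hG hgauss ⟨j₀, _⟩ _ _ ↦ ?_⟩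
  have : Nonempty (Fin M) := ⟨j₀⟩
  have hX : HasGaussianLaw (fun ω j ↦ G j ω) μ :=
    hasGaussianLaw_pi_of_forall_map_sum (measurable_pi_lambda _ hG).aemeasurable
      fun a ↦ ⟨0, hgauss a⟩
  refine stmt_2_general hX fun j ↦ ?_
  obtain ⟨v, hv⟩ := hgauss (Pi.single j 1)
  have hlaw : HasLaw (G j) (gaussianReal 0 v) μ :=
    ⟨(hG j).aemeasurable, by simpa [Pi.single_apply] using hv⟩
  exact hlaw.integral_eq.trans integral_id_gaussianReal
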